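/- In any Heyting algebra α, for every finite set s : Finset ι, every family a : ι → α and every b : α: if ⊤ ≤ (s.sup (fun i => ¬(a i))) ⊔ b, then s.inf a ≤ b. (This is the paper's theorem that from a Horn-clause sequent ⊤ ⊢ ¬φ₁ ∨ ⋯ ∨ ¬φₙ ∨ ψ with exactly one positive literal, one can derive the Horn sequent φ₁ ∧ ⋯ ∧ φₙ ⊢ ψ in intuitionistic logic, without Excluded Middle.) -/

import Mathlib

section HeytingAlgebra

variable {α ι : Type*} [HeytingAlgebra α]

theorem finset_sup_compl_le_compl_finset_inf (s : Finset ι) (a : ι → α) :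
    s.sup (fun i => (a i)ᶜ) ≤ (s.inf a)ᶜ :=
  Finset.sup_le fun _ hi => compl_le_compl (Finset.inf_le hi)

theorem finset_sup_compl_sup_le_finset_inf_himp (s : Finset ι) (a : ι → α) (b : α) :
    s.sup (fun i => (a i)ᶜ) ⊔ b ≤ s.inf a ⇨ b :=
  calc
    s.sup (fun i => (a i)ᶜ) ⊔ b ≤ (s.inf a)ᶜ ⊔ b :=
      sup_le_sup_right (finset_sup_compl_le_compl_finset_inf s a) b
    _ ≤ s.inf a ⇨ b := compl_sup_le_himp

end HeytingAlgebra

theorem horn_clause_to_horn_sequent {α : Type*} [HeytingAlgebra α] {ι : Type*}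
    [DecidableEq ι] (s : Finset ι) (a : ι → α) (b : α)
    (h : ⊤ ≤ (s.sup (fun i => (a i)ᶜ)) ⊔ b) : s.inf a ≤ b := by
  have himp_top : s.inf a ⇨ b = ⊤ :=
    top_le_iff.mp (h.trans (finset_sup_compl_sup_le_finset_inf_himp s a b))
  exact himp_eq_top_iff.mp himp_top
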